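/- For all real p, q > 1 with p ≠ q and all x > 0, the Turán-type double inequality (p − 1)(q − 1)/((p + q)/2 − 1)² < ζ((p+q)/2, x)² / (ζ(p, x) ζ(q, x)) < 1 holds. -/

import Mathlib

/-!
The upper bound is the strict Cauchy–Schwarz inequality for the series defining `ζ` (`hzeta_sq_lt`).

The lower bound says that `A(r) = r ζ(r + 1, x)` is strictly log-concave on `(0, ∞)` at midpoints.
By `integral_mellinFn`, `A(r) = Γ(r)⁻¹ ∫ t ^ (r - 1) g(t) dt` over `(0, ∞)` with
`g(t) = t exp (-x t) / (1 - exp (-t))`, and `g` is strictly log-concave (`strictConcaveOn_L`). For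
log-concave `g` the log-concavity of such normalised moments is a theorem of Borell, and its proof
is as follows. For `g₀(t) = C exp (-l t)` the normalised moment is `C l ^ (-r)`, which is log-affine
in `r`. Choose `C` and `l` so that the moments of `g` and `g₀` agree at `s - d` and `s + d`. Since
`log (g / g₀)` is strictly concave, `g - g₀` changes sign at most twice, so there is a quadratic
`Q(w) = α + β w + γ w ^ 2` with `β ≥ 0` such that `Q(t ^ d) (g(t) - g₀(t)) > 0` off a finite set
(`exists_quadratic`). Integrating against `t ^ (s - d - 1)` removes the `α` and `γ` terms and leaves
`β Γ(s) (A(s) - C l ^ (-s)) > 0`. Hence `A(s) ^ 2 > (C l ^ (-s)) ^ 2 = A(s - d) A(s + d)`.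
-/

open Real

/-- The Hurwitz zeta function `ζ(p, x) = ∑_{k=0}^∞ (k + x)^{-p}`. -/
noncomputable def hzeta (p x : ℝ) : ℝ :=
  ∑' k : ℕ, ((k : ℝ) + x) ^ (-p)

open MeasureTheory

/-! ### Sign changes of strictly concave functions -/

theorem forall_pos_or_forall_neg (φ : ℝ → ℝ) (s : Set ℝ) (hs : IsPreconnected s) (hc : ContinuousOn φ s)
    (hz : ∀ t ∈ s, φ t ≠ 0) : (∀ t ∈ s, 0 < φ t) ∨ (∀ t ∈ s, φ t < 0) := by
  by_contra! h
  obtain ⟨⟨a, ha, ha'⟩, b, hb, hb'⟩ := h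
  obtain ⟨t, ht, ht'⟩ := hs.intermediate_value ha hb hc ⟨ha', hb'⟩
  exact hz t ht ht'

/-- A strictly concave function `φ` on `(0, ∞)` has at most two sign changes, so some quadratic
polynomial in `w = t ^ e` has the same sign as `φ` off a finite set. The linear coefficient can be taken
nonnegative: with two zeros `a < b` of `φ` the polynomial is `(w - a ^ e) * (b ^ e - w)`, and
otherwise `±1` or `±(w ^ 2 - (a ^ e) ^ 2)` suffices. -/
theorem exists_quadratic (φ : ℝ → ℝ) (hc : ContinuousOn φ (Set.Ioi 0))
    (hconc : StrictConcaveOn ℝ (Set.Ioi 0) φ) (e : ℝ) (he : 0 < e) :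
    ∃ α β γ : ℝ, 0 ≤ β ∧ ∃ S : Set ℝ, S.Finite ∧ ∀ t, 0 < t → t ∉ S →
      0 < (α + β * t ^ e + γ * (t ^ e) ^ 2) * φ t := by
  have hmono : ∀ {a b : ℝ}, 0 < a → a < b → a ^ e < b ^ e := fun ha hab =>
    rpow_lt_rpow ha.le hab he
  have hwpos : ∀ {a : ℝ}, 0 < a → 0 < a ^ e := fun ha => rpow_pos_of_pos ha e
  by_cases h2 : ∃ a b, 0 < a ∧ a < b ∧ φ a = 0 ∧ φ b = 0
  · obtain ⟨a, b, ha, hab, hφa, hφb⟩ := h2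
    have hb := ha.trans hab
    refine ⟨-(a ^ e * b ^ e), a ^ e + b ^ e, -1, (add_pos (hwpos ha) (hwpos hb)).le,
      {a, b}, by simp, fun t ht hS => ?_⟩
    have hQ : -(a ^ e * b ^ e) + (a ^ e + b ^ e) * t ^ e + -1 * (t ^ e) ^ 2
        = (t ^ e - a ^ e) * (b ^ e - t ^ e) := by ring
    rw [hQ]
    simp only [Set.mem_insert_iff, Set.mem_singleton_iff, not_or] at hS
    rcases lt_or_gt_of_ne hS.1 with h | h
    · have h1 := hconc.slope_anti_adjacent ht hb h hab
      rw [hφa, hφb, sub_zero, zero_div, zero_sub, lt_div_iff₀ (sub_pos.2 h)] at h1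
      refine mul_pos_of_neg_of_neg (mul_neg_of_neg_of_pos ?_ ?_) (by linarith)
      · linarith [hmono ht h]
      · linarith [hmono ht (h.trans hab)]
    · rcases lt_or_gt_of_ne hS.2 with h' | h'
      · have h1 := hconc.slope_anti_adjacent ha hb h h'
        rw [hφa, hφb, sub_zero, zero_sub, div_lt_div_iff₀ (sub_pos.2 h') (sub_pos.2 h)] at h1
        refine mul_pos (mul_pos ?_ ?_) (by nlinarith)
        · linarith [hmono ha h]
        · linarith [hmono ht h']
      · have h1 := hconc.slope_anti_adjacent ha ht hab h'
        rw [hφa, hφb, sub_zero, sub_zero, zero_div, div_lt_iff₀ (sub_pos.2 h')] at h1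
        refine mul_pos_of_neg_of_neg (mul_neg_of_pos_of_neg ?_ ?_) (by linarith)
        · linarith [hmono ha h]
        · linarith [hmono hb h']
  · obtain ⟨a, ha, hz⟩ : ∃ a, 0 < a ∧ ∀ t, 0 < t → t ≠ a → φ t ≠ 0 := by
      by_cases h1 : ∃ a, 0 < a ∧ φ a = 0
      · obtain ⟨a, ha, hφa⟩ := h1
        refine ⟨a, ha, fun t ht hta h0 => h2 ?_⟩
        rcases lt_or_gt_of_ne hta with h | h
        · exact ⟨t, a, ht, h, h0, hφa⟩
        · exact ⟨a, t, ha, h, hφa, h0⟩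
      · exact ⟨1, one_pos, fun t ht _ h0 => h1 ⟨t, ht, h0⟩⟩
    have hl := forall_pos_or_forall_neg φ (Set.Ioo 0 a) isPreconnected_Ioo
      (hc.mono fun t ht => ht.1) fun t ht => hz t ht.1 ht.2.ne
    have hr := forall_pos_or_forall_neg φ (Set.Ioi a) isPreconnected_Ioi
      (hc.mono fun t ht => ha.trans ht) fun t ht => hz t (ha.trans ht) (ne_of_gt ht)
    have hsq : ∀ {a b : ℝ}, 0 < a → a < b → (a ^ e) ^ 2 < (b ^ e) ^ 2 := fun ha hab =>
      pow_lt_pow_left₀ (hmono ha hab) (hwpos ha).le two_ne_zero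
    rcases hl with hl | hl <;> rcases hr with hr | hr
    · refine ⟨1, 0, 0, le_rfl, {a}, by simp, fun t ht hta => ?_⟩
      rcases lt_or_gt_of_ne hta with h | h
      · linarith [hl t ⟨ht, h⟩]
      · linarith [hr t h]
    · refine ⟨(a ^ e) ^ 2, 0, -1, le_rfl, {a}, by simp, fun t ht hta => ?_⟩
      rcases lt_or_gt_of_ne hta with h | h
      · exact mul_pos (by linarith [hsq ht h]) (hl t ⟨ht, h⟩)
      · exact mul_pos_of_neg_of_neg (by linarith [hsq ha h]) (hr t h)
    · refine ⟨-(a ^ e) ^ 2, 0, 1, le_rfl, {a}, by simp, fun t ht hta => ?_⟩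
      rcases lt_or_gt_of_ne hta with h | h
      · exact mul_pos_of_neg_of_neg (by linarith [hsq ht h]) (hl t ⟨ht, h⟩)
      · exact mul_pos (by linarith [hsq ha h]) (hr t h)
    · refine ⟨-1, 0, 0, le_rfl, {a}, by simp, fun t ht hta => ?_⟩
      rcases lt_or_gt_of_ne hta with h | h
      · linarith [hl t ⟨ht, h⟩]
      · linarith [hr t h]

/-! ### Log-concavity of the Mellin kernel -/

/-- Strict log-concavity of `t / (1 - exp (-t))` on `(0, ∞)`. The second derivative is
`-1 / t ^ 2 + exp t / (exp t - 1) ^ 2`, and it is negative because `t / 2 < sinh (t / 2)`. -/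
theorem strictConcaveOn_L :
    StrictConcaveOn ℝ (Set.Ioi 0) (fun t : ℝ => log t - log (1 - exp (-t))) := by
  have hpos : ∀ {t : ℝ}, 0 < t → 0 < 1 - exp (-t) := fun ht => by
    have := exp_lt_exp.2 (neg_lt_zero.2 ht); rw [exp_zero] at this; linarith
  have hpos' : ∀ {t : ℝ}, 0 < t → 0 < exp t - 1 := fun ht => by
    have := one_lt_exp_iff.2 ht; linarith
  have hd : ∀ t : ℝ, 0 < t → HasDerivAt (fun t : ℝ => log t - log (1 - exp (-t)))
      (t⁻¹ - (exp t - 1)⁻¹) t := fun t ht => by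
    have h1 : HasDerivAt (fun t : ℝ => 1 - exp (-t)) (exp (-t)) t := by
      simpa using ((hasDerivAt_neg t).exp).const_sub 1
    refine ((hasDerivAt_log ht.ne').sub (h1.log (hpos ht).ne')).congr_deriv ?_
    have h2 := (hpos ht).ne'
    have h3 := (hpos' ht).ne'
    have h4 : exp (-t) * exp t = 1 := by rw [← exp_add]; simp
    congr 1
    rw [div_eq_iff h2, inv_mul_eq_div, eq_div_iff h3]
    linear_combination h4
  have hd2 : ∀ t : ℝ, 0 < t → HasDerivAt (fun t : ℝ => t⁻¹ - (exp t - 1)⁻¹)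
      (-(t ^ 2)⁻¹ + exp t / (exp t - 1) ^ 2) t := fun t ht => by
    refine ((hasDerivAt_inv ht.ne').sub
      (((Real.hasDerivAt_exp t).sub_const 1).inv (hpos' ht).ne')).congr_deriv ?_
    ring
  refine StrictAntiOn.strictConcaveOn_of_deriv (convex_Ioi 0)
    (fun t ht => (hd t ht).continuousAt.continuousWithinAt) ?_
  rw [interior_Ioi]
  refine StrictAntiOn.congr (f₁ := fun t : ℝ => t⁻¹ - (exp t - 1)⁻¹) ?_
    fun t ht => (hd t ht).deriv.symm
  refine strictAntiOn_of_deriv_neg (convex_Ioi 0)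
    (fun t ht => (hd2 t ht).continuousAt.continuousWithinAt) fun t ht => ?_
  rw [interior_Ioi] at ht
  have ht : 0 < t := ht
  rw [(hd2 t ht).deriv]
  have h1 : t / 2 < sinh (t / 2) := self_lt_sinh_iff.2 (by linarith)
  have h2 : exp t = exp (t / 2) ^ 2 := by rw [← exp_nat_mul]; congr 1; push_cast; ring
  have h3 : t * exp (t / 2) < exp t - 1 := by
    rw [sinh_eq, exp_neg] at h1
    have h4 := exp_pos (t / 2)
    have : t < exp (t / 2) - (exp (t / 2))⁻¹ := by linarith
    calc t * exp (t / 2) < (exp (t / 2) - (exp (t / 2))⁻¹) * exp (t / 2) := by gcongr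
      _ = _ := by rw [h2]; field_simp
  have h5 : t ^ 2 * exp t < (exp t - 1) ^ 2 := by
    calc t ^ 2 * exp t = (t * exp (t / 2)) ^ 2 := by rw [h2]; ring
      _ < _ := by gcongr
  have h6 : exp t / (exp t - 1) ^ 2 < (t ^ 2)⁻¹ := by
    rw [div_lt_iff₀ (by have := hpos' ht; positivity), inv_mul_eq_div, lt_div_iff₀ (by positivity)]
    linarith
  linarith

/-! ### Log-convexity of the Hurwitz zeta function -/

theorem summable_hz {p x : ℝ} (hp : 1 < p) (hx : 0 < x) :
    Summable fun k : ℕ => ((k : ℝ) + x) ^ (-p) := by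
  refine ((Real.summable_one_div_nat_add_rpow x p).2 hp).congr fun k => ?_
  have : 0 < (k : ℝ) + x := by positivity
  rw [abs_of_pos this, rpow_neg this.le, one_div]

theorem hzeta_pos {p x : ℝ} (hp : 1 < p) (hx : 0 < x) : 0 < hzeta p x :=
  (summable_hz hp hx).tsum_pos (fun k => by positivity) 0 (by positivity)

/-- Strict log-convexity of `p ↦ ζ(p, x)` at midpoints: the strict Cauchy–Schwarz inequality for the
sequences `(k + x) ^ (-p / 2)` and `(k + x) ^ (-q / 2)`, which are not proportional. -/
theorem hzeta_sq_lt (p q x : ℝ) (hp : 1 < p) (hq : 1 < q) (hpq : p ≠ q) (hx : 0 < x) :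
    hzeta ((p + q) / 2) x ^ 2 < hzeta p x * hzeta q x := by
  have hP := hzeta_pos hp hx
  have hQ := hzeta_pos hq hx
  have hM := hzeta_pos (p := (p + q) / 2) (by linarith) hx
  set c := √(hzeta q x)
  set d := √(hzeta p x)
  have hc : 0 < c := sqrt_pos.2 hQ
  have hd : 0 < d := sqrt_pos.2 hP
  have hc2 : c ^ 2 = hzeta q x := sq_sqrt hQ.le
  have hd2 : d ^ 2 = hzeta p x := sq_sqrt hP.le
  have hterm : ∀ k : ℕ, (c * ((k : ℝ) + x) ^ (-p / 2) - d * ((k : ℝ) + x) ^ (-q / 2)) ^ 2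
      = c ^ 2 * ((k : ℝ) + x) ^ (-p) + d ^ 2 * ((k : ℝ) + x) ^ (-q)
        - 2 * (c * d) * ((k : ℝ) + x) ^ (-((p + q) / 2)) := fun k => by
    have hk : 0 < (k : ℝ) + x := by positivity
    have e1 : ((k : ℝ) + x) ^ (-p) = (((k : ℝ) + x) ^ (-p / 2)) ^ 2 := by
      rw [← rpow_mul_natCast hk.le]; congr 1; push_cast; ring
    have e2 : ((k : ℝ) + x) ^ (-q) = (((k : ℝ) + x) ^ (-q / 2)) ^ 2 := by
      rw [← rpow_mul_natCast hk.le]; congr 1; push_cast; ring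
    have e3 : ((k : ℝ) + x) ^ (-((p + q) / 2))
        = ((k : ℝ) + x) ^ (-p / 2) * ((k : ℝ) + x) ^ (-q / 2) := by
      rw [← rpow_add hk]; congr 1; ring
    rw [e1, e2, e3]; ring
  have hsum : HasSum (fun k : ℕ =>
      (c * ((k : ℝ) + x) ^ (-p / 2) - d * ((k : ℝ) + x) ^ (-q / 2)) ^ 2)
      (c ^ 2 * hzeta p x + d ^ 2 * hzeta q x - 2 * (c * d) * hzeta ((p + q) / 2) x) := by
    simp_rw [hterm]
    exact (((summable_hz hp hx).hasSum.mul_left _).add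
      ((summable_hz hq hx).hasSum.mul_left _)).sub
      ((summable_hz (p := (p + q) / 2) (by linarith) hx).hasSum.mul_left _)
  -- If every term vanished, `(k + x) ^ ((q - p) / 2)` would not depend on `k`.
  obtain ⟨i, hi⟩ : ∃ i : ℕ, c * ((i : ℝ) + x) ^ (-p / 2) - d * ((i : ℝ) + x) ^ (-q / 2) ≠ 0 := by
    by_contra! h
    have hr : ∀ k : ℕ, ((k : ℝ) + x) ^ ((q - p) / 2) = d / c := fun k => by
      have hk : 0 < (k : ℝ) + x := by positivity
      have hq0 : 0 < ((k : ℝ) + x) ^ (-q / 2) := by positivity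
      rw [eq_div_iff hc.ne', show (q - p) / 2 = -p / 2 - -q / 2 by ring, rpow_sub hk,
        div_mul_eq_mul_div, div_eq_iff hq0.ne']
      linarith [h k]
    have h01 := (hr 0).trans (hr 1).symm
    rw [rpow_left_inj (by positivity) (by positivity)
      (div_ne_zero (sub_ne_zero.2 hpq.symm) two_ne_zero)] at h01
    norm_num at h01
  have hpos := hsum.summable.tsum_pos (fun k => sq_nonneg _) i (by positivity)
  rw [hsum.tsum_eq, hc2, hd2] at hpos
  have hlt : hzeta ((p + q) / 2) x < c * d := by
    have h1 : c * d * hzeta ((p + q) / 2) x < c * d * (c * d) := by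
      have : c * d * (c * d) = hzeta p x * hzeta q x := by rw [← hc2, ← hd2]; ring
      linarith
    exact lt_of_mul_lt_mul_left h1 (by positivity)
  calc hzeta ((p + q) / 2) x ^ 2 < (c * d) ^ 2 := by gcongr
    _ = _ := by rw [mul_pow, hc2, hd2, mul_comm]

/-! ### Mellin transforms -/

/-- The Bochner integral of a non-integrable function is `0` by convention, so a positive value
certifies integrability. -/
theorem integrableOn_of_pos {f : ℝ → ℝ} {s : Set ℝ} (h : 0 < ∫ t in s, f t) :
    IntegrableOn f s := by
  by_contra hf
  rw [integral_undef hf] at h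
  exact h.false

/-- The function `t * exp (-x t) / (1 - exp (-t))`, whose Mellin transform at `r` is
`Γ(r + 1) ζ(r + 1, x)`. -/
noncomputable def mellinFn (x t : ℝ) : ℝ := t * exp (-(x * t)) / (1 - exp (-t))

theorem integral_gamma {r l : ℝ} (hr : 0 < r) (hl : 0 < l) :
    ∫ t in Set.Ioi (0 : ℝ), t ^ (r - 1) * exp (-(l * t)) = Gamma r * l ^ (-r) := by
  rw [integral_rpow_mul_exp_neg_mul_Ioi hr hl, one_div, inv_rpow hl.le, rpow_neg hl.le, mul_comm]

/-- The Mellin transform of `mellinFn x`, by expanding `1 / (1 - exp (-t))` as a geometric series and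
integrating termwise. Writing `Γ(r + 1) = Γ(r) r` exhibits `r ζ(r + 1, x)` as the transform divided
by `Γ(r)`. -/
theorem integral_mellinFn {r x : ℝ} (hr : 0 < r) (hx : 0 < x) :
    ∫ t in Set.Ioi (0 : ℝ), t ^ (r - 1) * mellinFn x t = Gamma r * (r * hzeta (r + 1) x) := by
  have hv : ∀ k : ℕ, ∫ t in Set.Ioi (0 : ℝ), t ^ r * exp (-(((k : ℝ) + x) * t))
      = Gamma (r + 1) * ((k : ℝ) + x) ^ (-(r + 1)) := fun k => by
    rw [← integral_gamma (by linarith) (by positivity : 0 < (k : ℝ) + x), add_sub_cancel_right]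
  have hi : ∀ k : ℕ, IntegrableOn (fun t : ℝ => t ^ r * exp (-(((k : ℝ) + x) * t)))
      (Set.Ioi (0 : ℝ)) := fun k => integrableOn_of_pos <| by
    rw [hv]
    have := Gamma_pos_of_pos (by linarith : 0 < r + 1)
    positivity
  have hn : ∀ k : ℕ, ∫ t in Set.Ioi (0 : ℝ), ‖t ^ r * exp (-(((k : ℝ) + x) * t))‖
      = Gamma (r + 1) * ((k : ℝ) + x) ^ (-(r + 1)) := fun k => by
    rw [← hv]
    refine setIntegral_congr_fun measurableSet_Ioi fun t ht => ?_
    have ht : 0 < t := ht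
    exact norm_of_nonneg (by positivity)
  have hs := summable_hz (p := r + 1) (by linarith) hx
  have key := hasSum_integral_of_summable_integral_norm hi
    (by simp_rw [hn]; exact hs.mul_left _)
  simp_rw [hv] at key
  have h1 := key.unique (hs.hasSum.mul_left _)
  rw [← mul_assoc, mul_comm (Gamma r), ← Gamma_add_one hr.ne']
  refine Eq.trans (setIntegral_congr_fun measurableSet_Ioi fun t ht => ?_) h1
  have ht : 0 < t := ht
  have he : exp (-t) < 1 := by
    have := exp_lt_exp.2 (neg_lt_zero.2 ht); rwa [exp_zero] at this
  have hg := (hasSum_geometric_of_lt_one (exp_pos (-t)).le he).mul_left (t ^ r * exp (-(x * t)))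
  have e : ∀ k : ℕ, t ^ r * exp (-(x * t)) * exp (-t) ^ k = t ^ r * exp (-(((k : ℝ) + x) * t)) :=
    fun k => by
      rw [← exp_nat_mul, mul_assoc, ← exp_add]; congr 2; ring
  simp_rw [e] at hg
  rw [hg.tsum_eq]
  simp only [mellinFn]
  rw [rpow_sub_one ht.ne']
  field_simp

/-! ### Log-concavity of the normalised zeta function -/

/-- Strict log-concavity of `r ↦ r ζ(r + 1, x)` on `(0, ∞)` at midpoints, by comparing `mellinFn x`
with the exponential `C exp (-l t)` that has the same Mellin transform at `s - d` and `s + d`. -/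
theorem hzeta_lower (s d x : ℝ) (hd : 0 < d) (hsd : d < s) (hx : 0 < x) :
    ((s - d) * hzeta (s - d + 1) x) * ((s + d) * hzeta (s + d + 1) x)
      < (s * hzeta (s + 1) x) ^ 2 := by
  have hs : 0 < s := hd.trans hsd
  have hs1 : 0 < s - d := sub_pos.2 hsd
  have hs2 : 0 < s + d := by linarith
  have hApos : ∀ r : ℝ, 0 < r → 0 < r * hzeta (r + 1) x := fun r hr =>
    mul_pos hr (hzeta_pos (by linarith) hx)
  set A := fun r => r * hzeta (r + 1) x with hA
  change A (s - d) * A (s + d) < A s ^ 2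
  have h1 : 0 < A (s - d) := hApos _ hs1
  have h2 : 0 < A (s + d) := hApos _ hs2
  obtain ⟨C, l, hC, hl, hC1, hC2⟩ : ∃ C l : ℝ, 0 < C ∧ 0 < l ∧
      A (s - d) = C * l ^ (-(s - d)) ∧ A (s + d) = C * l ^ (-(s + d)) := by
    have hl : 0 < (A (s - d) / A (s + d)) ^ (1 / (2 * d)) := by positivity
    refine ⟨A (s - d) * ((A (s - d) / A (s + d)) ^ (1 / (2 * d))) ^ (s - d), _,
      by positivity, hl, ?_, ?_⟩
    · rw [mul_assoc, ← rpow_add hl]; simp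
    · rw [mul_assoc, ← rpow_add hl, ← rpow_mul (by positivity),
        show 1 / (2 * d) * (s - d + -(s + d)) = -1 by field_simp; ring, rpow_neg_one]
      field_simp
  have hGm : ∀ r : ℝ, 0 < r → ∫ t in Set.Ioi (0 : ℝ), t ^ (r - 1) * mellinFn x t = Gamma r * A r :=
    fun r hr => integral_mellinFn hr hx
  have hIg : ∀ r : ℝ, 0 < r → IntegrableOn (fun t => t ^ (r - 1) * mellinFn x t) (Set.Ioi (0 : ℝ)) :=
    fun r hr => integrableOn_of_pos <| by
      rw [hGm r hr]; exact mul_pos (Gamma_pos_of_pos hr) (hApos r hr)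
  have hIe : ∀ r : ℝ, 0 < r → IntegrableOn (fun t => t ^ (r - 1) * exp (-(l * t)))
      (Set.Ioi (0 : ℝ)) :=
    fun r hr => integrableOn_of_pos <| by
      rw [integral_gamma hr hl]
      exact mul_pos (Gamma_pos_of_pos hr) (by positivity)
  -- The Mellin transform of `D` vanishes at `s - d` and `s + d`.
  set D := fun t => mellinFn x t - C * exp (-(l * t)) with hD
  have hDr : ∀ r : ℝ, (fun t => t ^ (r - 1) * D t) =
      fun t => t ^ (r - 1) * mellinFn x t - C * (t ^ (r - 1) * exp (-(l * t))) := fun r => by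
    funext t; simp only [hD]; ring
  have hID : ∀ r : ℝ, 0 < r → IntegrableOn (fun t => t ^ (r - 1) * D t) (Set.Ioi (0 : ℝ)) :=
    fun r hr => by
      rw [hDr]; exact (hIg r hr).sub ((hIe r hr).const_mul C)
  have hJ : ∀ r : ℝ, 0 < r → ∫ t in Set.Ioi (0 : ℝ), t ^ (r - 1) * D t
      = Gamma r * (A r - C * l ^ (-r)) := fun r hr => by
    rw [hDr, integral_sub (hIg r hr) ((hIe r hr).const_mul C), integral_const_mul,
      hGm r hr, integral_gamma hr hl]
    ring
  -- `φ` is the logarithm of `mellinFn x t / (C * exp (-l t))`, so it has the sign of `D`.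
  set φ := fun t : ℝ => log t - log (1 - exp (-t)) + ((l - x) * t - log C) with hφ
  have hφconc : StrictConcaveOn ℝ (Set.Ioi 0) φ := by
    refine strictConcaveOn_L.add_concaveOn ⟨convex_Ioi 0, fun a _ b _ u v _ _ huv => ?_⟩
    simp only [smul_eq_mul]
    refine le_of_eq ?_
    linear_combination (-log C) * huv
  have hpos : ∀ {t : ℝ}, 0 < t → 0 < 1 - exp (-t) := fun ht => by
    have := exp_lt_exp.2 (neg_lt_zero.2 ht); rw [exp_zero] at this; linarith
  have hφcont : ContinuousOn φ (Set.Ioi 0) := by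
    refine ContinuousOn.add (ContinuousOn.sub (continuousOn_log.mono ?_)
      (ContinuousOn.log (by fun_prop) fun t ht => (hpos ht).ne')) (by fun_prop)
    intro t ht
    exact ne_of_gt ht
  have hDφ : ∀ t, 0 < t → D t = C * exp (-(l * t)) * (exp (φ t) - 1) := fun t ht => by
    have := hpos ht
    have e : exp (φ t) = t / (1 - exp (-t)) * (exp (l * t) * exp (-(x * t)) / C) := by
      simp only [hφ]
      rw [exp_add, exp_sub, exp_log ht, exp_log this, exp_sub, exp_log hC, ← exp_add]
      congr 4; ring
    have e2 : exp (-(l * t)) * exp (l * t) = 1 := by rw [← exp_add]; simp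
    rw [e]
    simp only [hD, mellinFn]
    generalize exp (-(l * t)) = u at e2 ⊢
    generalize exp (l * t) = v at e2 ⊢
    generalize exp (-(x * t)) = w
    field_simp
    linear_combination (-(t * w)) * e2
  obtain ⟨α, β, γ, hβ, S, hS, hQ⟩ := exists_quadratic φ hφcont hφconc d hd
  have hQD : ∀ t, 0 < t → t ∉ S → 0 < (α + β * t ^ d + γ * (t ^ d) ^ 2) * D t :=
    fun t ht htS => by
      have h := hQ t ht htS
      have hf0 : 0 < C * exp (-(l * t)) := by positivity
      rw [hDφ t ht]
      rcases pos_and_pos_or_neg_and_neg_of_mul_pos h with ⟨ha, hb⟩ | ⟨ha, hb⟩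
      · exact mul_pos ha (mul_pos hf0 (sub_pos.2 (one_lt_exp_iff.2 hb)))
      · exact mul_pos_of_neg_of_neg ha
          (mul_neg_of_pos_of_neg hf0 (sub_neg.2 (exp_lt_one_iff.2 hb)))
  have hexp : ∀ t ∈ Set.Ioi (0 : ℝ),
      t ^ (s - d - 1) * ((α + β * t ^ d + γ * (t ^ d) ^ 2) * D t)
      = α * (t ^ (s - d - 1) * D t) + β * (t ^ (s - 1) * D t)
        + γ * (t ^ (s + d - 1) * D t) := fun t ht => by
    have ht : 0 < t := ht
    have e1 : t ^ (s - 1) = t ^ (s - d - 1) * t ^ d := by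
      rw [← rpow_add ht]; congr 1; ring
    have e2 : t ^ (s + d - 1) = t ^ (s - d - 1) * (t ^ d) ^ 2 := by
      rw [sq, ← rpow_add ht, ← rpow_add ht]; congr 1; ring
    rw [e1, e2]; ring
  have i1 := (hID _ hs1).const_mul α
  have i2 := (hID _ hs).const_mul β
  have i3 := (hID _ hs2).const_mul γ
  have i12 : IntegrableOn (fun t => α * (t ^ (s - d - 1) * D t) + β * (t ^ (s - 1) * D t))
      (Set.Ioi (0 : ℝ)) := i1.add i2
  -- The constant and quadratic terms integrate to zero, leaving the transform at `s` alone.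
  have hint : ∫ t in Set.Ioi (0 : ℝ),
      t ^ (s - d - 1) * ((α + β * t ^ d + γ * (t ^ d) ^ 2) * D t)
      = β * (Gamma s * (A s - C * l ^ (-s))) := by
    rw [setIntegral_congr_fun measurableSet_Ioi hexp, integral_add i12 i3,
      integral_add i1 i2, integral_const_mul, integral_const_mul, integral_const_mul,
      hJ _ hs1, hJ _ hs, hJ _ hs2, hC1, hC2]
    ring
  have hpos_int : 0 < ∫ t in Set.Ioi (0 : ℝ),
      t ^ (s - d - 1) * ((α + β * t ^ d + γ * (t ^ d) ^ 2) * D t) := by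
    have hI : IntegrableOn (fun t => t ^ (s - d - 1) *
        ((α + β * t ^ d + γ * (t ^ d) ^ 2) * D t)) (Set.Ioi (0 : ℝ)) :=
      IntegrableOn.congr_fun (i12.add i3) (fun t ht => (hexp t ht).symm) measurableSet_Ioi
    have hp : ∀ t ∈ Set.Ioi (0 : ℝ) \ S, 0 < t ^ (s - d - 1) *
        ((α + β * t ^ d + γ * (t ^ d) ^ 2) * D t) := fun t ht =>
      mul_pos (rpow_pos_of_pos ht.1 _) (hQD t ht.1 ht.2)
    have hS0 : volume S = 0 := hS.measure_zero _
    rw [setIntegral_pos_iff_support_of_nonneg_ae _ hI]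
    · have h0 : 0 < volume (Set.Ioi (0 : ℝ) \ S) := by
        rw [measure_sdiff_null hS0]; simp
      refine h0.trans_le (measure_mono fun t ht => ?_)
      exact ⟨(hp t ht).ne', ht.1⟩
    · filter_upwards [ae_restrict_mem measurableSet_Ioi,
        ae_restrict_of_ae (measure_eq_zero_iff_ae_notMem.1 hS0)] with t ht htS
      exact (hp t ⟨ht, htS⟩).le
  rw [hint] at hpos_int
  have h3 : C * l ^ (-s) < A s := by
    have := pos_of_mul_pos_right hpos_int hβ
    exact sub_pos.1 (pos_of_mul_pos_right this (Gamma_pos_of_pos hs).le)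
  calc A (s - d) * A (s + d) = (C * l ^ (-s)) ^ 2 := by
        have e : l ^ (-(s - d)) * l ^ (-(s + d)) = l ^ (-s) * l ^ (-s) := by
          rw [← rpow_add hl, ← rpow_add hl]; congr 1; ring
        rw [hC1, hC2]
        linear_combination C ^ 2 * e
    _ < A s ^ 2 := by gcongr

theorem hzeta_lower' (p q x : ℝ) (hp : 1 < p) (hpq : p < q) (hx : 0 < x) :
    (p - 1) * (q - 1) * (hzeta p x * hzeta q x) <
      ((p + q) / 2 - 1) ^ 2 * hzeta ((p + q) / 2) x ^ 2 := by
  have h := hzeta_lower ((p + q) / 2 - 1) ((q - p) / 2) x (by linarith) (by linarith) hx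
  rw [show (p + q) / 2 - 1 - (q - p) / 2 = p - 1 by ring,
    show (p + q) / 2 - 1 + (q - p) / 2 = q - 1 by ring, sub_add_cancel, sub_add_cancel,
    sub_add_cancel] at h
  linarith

theorem stmt6 (p q x : ℝ) (hp : 1 < p) (hq : 1 < q) (hpq : p ≠ q) (hx : 0 < x) :
    (p - 1) * (q - 1) / ((p + q) / 2 - 1) ^ 2 <
      hzeta ((p + q) / 2) x ^ 2 / (hzeta p x * hzeta q x) ∧
    hzeta ((p + q) / 2) x ^ 2 / (hzeta p x * hzeta q x) < 1 := by
  have hPQ := mul_pos (hzeta_pos hp hx) (hzeta_pos hq hx)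
  have hm : 0 < (p + q) / 2 - 1 := by linarith
  constructor
  · rw [div_lt_div_iff₀ (by positivity) hPQ]
    rcases lt_or_gt_of_ne hpq with h | h
    · linarith [hzeta_lower' p q x hp h hx]
    · have := hzeta_lower' q p x hq h hx
      rw [add_comm q p] at this
      linarith
  · rw [div_lt_one hPQ]
    exact hzeta_sq_lt p q x hp hq hpq hx
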